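/- Let s ≥ 0 be real and let ρ be a non-trivial zero of the Riemann zeta function. Set d := min_{t ≥ 0} |ρ − s − t|. Then uniformly for x ≥ 2: ∫₀^∞ x^{ρ−s−t}/(ρ−s−t) dt = x^{ρ−s}/( (ρ−s) log x ) + O( x^{Re ρ − s}/( d |ρ−s| (log x)² ) ), with an absolute implied constant. -/

import Mathlib

open Real Complex MeasureTheory

open Filter Asymptotics Topology Set

/-- The fractional part of `t` for `t > 1`, extended by zero. -/
noncomputable def fractAboveOne : ℝ → ℂ :=
  indicator (Ioi 1) fun t => ((Int.fract t : ℝ) : ℂ)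

lemma norm_fractAboveOne_le (t : ℝ) : ‖fractAboveOne t‖ ≤ 1 := by
  refine (norm_indicator_le_norm_self _ _).trans ?_
  rw [Complex.norm_real, Real.norm_of_nonneg (Int.fract_nonneg t)]
  exact (Int.fract_lt_one t).le

lemma locallyIntegrableOn_fractAboveOne : LocallyIntegrableOn fractAboveOne (Ioi 0) := by
  refine LocallyIntegrable.locallyIntegrableOn ?_ _
  refine (locallyIntegrable_const (1 : ℝ)).mono ?_ (.of_forall fun t => ?_)
  · exact ((Complex.measurable_ofReal.comp measurable_fract).indicator
      measurableSet_Ioi).aestronglyMeasurable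
  · simpa using norm_fractAboveOne_le t

lemma fractAboveOne_isBigO_atTop :
    fractAboveOne =O[atTop] fun t : ℝ => t ^ (-(0 : ℝ)) :=
  .of_bound 1 (.of_forall fun t => by simpa using norm_fractAboveOne_le t)

lemma fractAboveOne_isBigO_zero (b : ℝ) :
    fractAboveOne =O[𝓝[>] 0] fun t : ℝ => t ^ (-b) := by
  refine (isBigO_zero _ _).congr' ?_ .rfl
  filter_upwards [nhdsWithin_le_nhds (Iio_mem_nhds zero_lt_one)] with t ht
  exact (indicator_of_notMem (not_lt.mpr (le_of_lt ht)) _).symm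

lemma mellin_fractAboveOne (s : ℂ) :
    mellin fractAboveOne s = ∫ t : ℝ in Ioi 1, (t : ℂ) ^ (s - 1) * ((Int.fract t : ℝ) : ℂ) := by
  have h (t : ℝ) : (t : ℂ) ^ (s - 1) • fractAboveOne t =
      indicator (Ioi 1) (fun t : ℝ => (t : ℂ) ^ (s - 1) * ((Int.fract t : ℝ) : ℂ)) t := by
    by_cases ht : t ∈ Ioi (1 : ℝ) <;> simp [fractAboveOne, ht]
  simp_rw [mellin, h]
  rw [setIntegral_indicator measurableSet_Ioi,
    inter_eq_right.mpr (Ioi_subset_Ioi zero_le_one)]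

lemma riemannZeta_eq_mellin_fract {s : ℂ} (hs : 1 < s.re) :
    riemannZeta s = s * (1 / (s - 1) - mellin fractAboveOne (-s)) := by
  have hO : (fun n : ℕ => ∑ k ∈ Finset.Icc 1 n, ‖(1 : ℕ → ℂ) k‖) =O[atTop]
      fun n => (n : ℝ) ^ (1 : ℝ) := by
    simpa using isBigO_refl (fun n : ℕ => (n : ℝ)) atTop
  have hint : IntegrableOn (fun t : ℝ => (t : ℂ) ^ (-s - 1) * ((Int.fract t : ℝ) : ℂ)) (Ioi 1) := by
    have h : MellinConvergent fractAboveOne (-s) :=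
      mellinConvergent_of_isBigO_rpow locallyIntegrableOn_fractAboveOne
        fractAboveOne_isBigO_atTop (by simp; linarith)
        (fractAboveOne_isBigO_zero (-s.re - 1)) (by simp)
    refine (h.mono_set (Ioi_subset_Ioi zero_le_one)).congr_fun (fun t ht => ?_) measurableSet_Ioi
    simp [fractAboveOne, indicator_of_mem ht]
  have hre : (-s).re < -1 := by simpa using hs
  rw [← LSeries_one_eq_riemannZeta hs, LSeries_eq_mul_integral' 1 zero_le_one hs hO,
    mellin_fractAboveOne]
  congr 1
  have hpow : ∫ t : ℝ in Ioi 1, (t : ℂ) ^ (-s) = 1 / (s - 1) := by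
    have : s - 1 ≠ 0 := fun h => by simp [sub_eq_zero.mp h] at hs
    have : -s + 1 ≠ 0 := by rwa [neg_add_eq_sub, ← neg_sub, neg_ne_zero]
    rw [integral_Ioi_cpow_of_lt hre one_pos]
    simp
    field_simp
    ring
  rw [← hpow, ← integral_sub (integrableOn_Ioi_cpow_of_lt hre one_pos) hint]
  refine setIntegral_congr_fun measurableSet_Ioi fun t ht => ?_
  have ht0 : 0 < t := one_pos.trans ht
  have hfl : ((⌊t⌋₊ : ℝ) : ℂ) = t - (Int.fract t : ℝ) := by
    rw [← Complex.ofReal_sub, Int.self_sub_fract, natCast_floor_eq_intCast_floor ht0.le]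
  have ht1 : (t : ℂ) ≠ 0 := by exact_mod_cast ht0.ne'
  have h1 : (t : ℂ) ^ (-s) = t ^ (-s - 1) * t := by
    rw [Complex.cpow_sub _ _ ht1, Complex.cpow_one]; field_simp
  have h2 : -(s + 1) = -s - 1 := by ring
  simp only [Pi.one_apply, Finset.sum_const, Nat.card_Icc, add_tsub_cancel_right, nsmul_eq_mul,
    mul_one]
  rw [h1, h2, ← Complex.ofReal_natCast, hfl]
  ring

lemma riemannZeta₁_eq_mellin_fract {s : ℂ} (hs : 0 < s.re) :
    riemannZeta₁ s = s * (1 - (s - 1) * mellin fractAboveOne (-s)) := by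
  have hopen : IsOpen {s : ℂ | 0 < s.re} := isOpen_lt continuous_const Complex.continuous_re
  have hconn : IsPreconnected {s : ℂ | 0 < s.re} :=
    (convex_halfSpace_re_gt 0).isPreconnected
  refine AnalyticOnNhd.eqOn_of_preconnected_of_eventuallyEq (𝕜 := ℂ)
    (g := fun s => s * (1 - (s - 1) * mellin fractAboveOne (-s)))
    (differentiable_riemannZeta₁.differentiableOn.analyticOnNhd hopen)
    (DifferentiableOn.analyticOnNhd (fun w hw => ?_) hopen) hconn
    (z₀ := 2) (by simp) ?_ hs
  · have hd : DifferentiableAt ℂ (mellin fractAboveOne) (-w) :=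
      mellin_differentiableAt_of_isBigO_rpow locallyIntegrableOn_fractAboveOne
        fractAboveOne_isBigO_atTop (by simpa using hw)
        (fractAboveOne_isBigO_zero (-w.re - 1)) (by simp)
    have hc : DifferentiableAt ℂ (fun u => mellin fractAboveOne (-u)) w :=
      hd.comp w differentiableAt_id.neg
    exact (differentiableAt_id.mul (((differentiableAt_id.sub_const 1).mul hc).const_sub
      1)).differentiableWithinAt
  · filter_upwards [(isOpen_lt continuous_const Complex.continuous_re).mem_nhds
      (show (1 : ℝ) < (2 : ℂ).re by simp)] with w hw
    have hw1 : w ≠ 1 := fun h => by simp [h] at hw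
    have hw2 : w - 1 ≠ 0 := sub_ne_zero.mpr hw1
    have h := (riemannZeta_eq_inv_sub_mul hw1).symm.trans (riemannZeta_eq_mellin_fract hw)
    field_simp at h
    rw [h]

lemma mellin_fractAboveOne_re_nonneg (σ : ℝ) : 0 ≤ (mellin fractAboveOne (σ : ℂ)).re := by
  have h : mellin fractAboveOne (σ : ℂ) =
      ((∫ t : ℝ in Ioi 1, t ^ (σ - 1) * Int.fract t : ℝ) : ℂ) := by
    rw [mellin_fractAboveOne, ← integral_complex_ofReal]
    refine setIntegral_congr_fun measurableSet_Ioi fun t ht => ?_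
    have ht0 : 0 ≤ t := zero_le_one.trans (le_of_lt ht)
    simp [Complex.ofReal_cpow ht0]
  rw [h, Complex.ofReal_re]
  refine setIntegral_nonneg measurableSet_Ioi fun t ht => ?_
  exact mul_nonneg (Real.rpow_nonneg (zero_le_one.trans (le_of_lt ht)) _) (Int.fract_nonneg t)

/-- `(s - 1) ζ(s)` has no zeros on `[0, 1]`. -/
lemma riemannZeta₁_ofReal_ne_zero {σ : ℝ} (h0 : 0 ≤ σ) (h1 : σ ≤ 1) :
    riemannZeta₁ (σ : ℂ) ≠ 0 := by
  rcases h0.eq_or_lt with rfl | h0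
  · have h := riemannZeta_eq_inv_sub_mul zero_ne_one
    intro h'
    simp only [Complex.ofReal_zero] at h'
    rw [h', mul_zero, riemannZeta_zero] at h
    norm_num at h
  · rw [riemannZeta₁_eq_mellin_fract (by simpa using h0)]
    refine mul_ne_zero (by exact_mod_cast h0.ne') fun h => ?_
    have hM := mellin_fractAboveOne_re_nonneg (-σ)
    have := congrArg Complex.re h
    rw [← Complex.ofReal_neg, ← Complex.ofReal_one, ← Complex.ofReal_sub, Complex.sub_re,
      Complex.re_ofReal_mul, Complex.ofReal_re, Complex.zero_re] at this
    nlinarith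

/-- The imaginary parts of the zeros of `ζ` in the critical strip are bounded away from zero. -/
lemma exists_pos_le_abs_im_of_riemannZeta_eq_zero :
    ∃ c : ℝ, 0 < c ∧ ∀ z : ℂ, riemannZeta z = 0 → 0 < z.re → z.re < 1 → c ≤ |z.im| := by
  let K : Set ℂ := (Icc 0 1 ×ℂ Icc (-1) 1) ∩ {z | riemannZeta₁ z = 0}
  have hK : IsCompact K := (isCompact_Icc.reProdIm isCompact_Icc).inter_right
    (isClosed_eq differentiable_riemannZeta₁.continuous continuous_const)
  have hpos : ∀ z ∈ K, 0 < |z.im| := fun z hz => abs_pos.mpr fun him =>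
    riemannZeta₁_ofReal_ne_zero hz.1.1.1 hz.1.1.2 (by
      rw [show (z.re : ℂ) = z from Complex.ext rfl (by simp [him])]
      exact hz.2)
  obtain ⟨c, hc, hcK⟩ := hK.exists_forall_le' (f := fun z : ℂ => |z.im|)
    (continuous_abs.comp Complex.continuous_im).continuousOn hpos
  refine ⟨min c 1, lt_min hc one_pos, fun z hz h0 h1 => ?_⟩
  by_cases him : |z.im| ≤ 1
  · refine (min_le_left _ _).trans (hcK z ⟨⟨⟨h0.le, h1.le⟩, abs_le.mp him⟩, ?_⟩)
    have hz1 : z ≠ 1 := fun h => by simp [h] at h1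
    rw [riemannZeta_eq_inv_sub_mul hz1] at hz
    exact (mul_eq_zero.mp hz).resolve_left (inv_ne_zero (sub_ne_zero.mpr hz1))
  · exact (min_le_right _ _).trans (not_le.mp him).le

lemma norm_ofReal_cpow_sub {x : ℝ} (hx : 0 < x) (w : ℂ) (t : ℝ) :
    ‖(x : ℂ) ^ (w - t)‖ = x ^ w.re * rexp (-Real.log x * t) := by
  rw [Complex.norm_cpow_eq_rpow_re_of_pos hx, Complex.sub_re, Complex.ofReal_re,
    Real.rpow_sub hx, Real.rpow_def_of_pos hx t, neg_mul, Real.exp_neg, div_eq_mul_inv]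

/-- If `‖w - t‖ ≥ d` and `‖w‖ ≤ K ‖w - t‖` for `t ≥ 0`, one integration by parts evaluates
`∫₀^∞ x^(w-t)/(w-t) dt` up to an error of size `x^(Re w)/(d ‖w‖ (log x)²)`. -/
lemma norm_integral_cpow_sub_div_sub_le {x d K : ℝ} {w : ℂ} (hx : 1 < x) (hd : 0 < d)
    (hdw : ∀ t : ℝ, 0 ≤ t → d ≤ ‖w - t‖) (hK : ∀ t : ℝ, 0 ≤ t → ‖w‖ ≤ K * ‖w - t‖) :
    ‖(∫ t in Ioi (0 : ℝ), (x : ℂ) ^ (w - t) / (w - t)) - (x : ℂ) ^ w / (w * Real.log x)‖ ≤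
      K * x ^ w.re / (d * ‖w‖ * Real.log x ^ 2) := by
  have hx0 : 0 < x := one_pos.trans hx
  have hxc : (x : ℂ) ≠ 0 := by exact_mod_cast hx0.ne'
  set L := Real.log x with hL
  have hLpos : 0 < L := Real.log_pos hx
  have hLc : (L : ℂ) ≠ 0 := by exact_mod_cast hLpos.ne'
  have hwt (t : ℝ) (ht : 0 ≤ t) : w - t ≠ 0 := norm_pos_iff.mp (hd.trans_le (hdw t ht))
  have hw : 0 < ‖w‖ := by simpa using hwt 0 le_rfl
  have hcpow (t : ℝ) : HasDerivAt (fun t : ℝ => (x : ℂ) ^ (w - t))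
      (-(L * (x : ℂ) ^ (w - t))) t := by
    have h := ((hasDerivAt_id' (t : ℂ)).const_sub w).const_cpow (c := (x : ℂ)) (Or.inl hxc)
    refine h.comp_ofReal.congr_deriv ?_
    rw [← Complex.ofReal_log hx0.le, ← hL]
    ring
  have hlin (t : ℝ) : HasDerivAt (fun t : ℝ => w - (t : ℂ)) (-1) t :=
    ((hasDerivAt_id' (t : ℂ)).const_sub w).comp_ofReal
  have hcont : Continuous fun t : ℝ => (x : ℂ) ^ (w - t) :=
    continuous_iff_continuousAt.mpr fun t => (hcpow t).continuousAt
  have hexp : IntegrableOn (fun t => rexp (-L * t)) (Ioi 0) :=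
    integrableOn_exp_mul_Ioi (neg_lt_zero.mpr hLpos) 0
  have hint (k : ℕ) : IntegrableOn (fun t : ℝ => (x : ℂ) ^ (w - t) / (w - t) ^ k) (Ioi 0) := by
    refine (hexp.const_mul (x ^ w.re / d ^ k)).mono' ?_ ?_
    · refine ContinuousOn.aestronglyMeasurable ?_ measurableSet_Ioi
      exact hcont.continuousOn.div (by fun_prop) fun t ht => pow_ne_zero k (hwt t (le_of_lt ht))
    · refine (ae_restrict_iff' measurableSet_Ioi).mpr (.of_forall fun t ht => ?_)
      rw [norm_div, norm_pow, norm_ofReal_cpow_sub hx0, div_mul_eq_mul_div]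
      gcongr
      exact hdw t (le_of_lt ht)
  have hderiv (t : ℝ) (ht : t ∈ Ici (0 : ℝ)) :
      HasDerivAt (fun t : ℝ => -((x : ℂ) ^ (w - t) / (w - t)) / L)
        ((x : ℂ) ^ (w - t) / (w - t) ^ 1 - (x : ℂ) ^ (w - t) / (w - t) ^ 2 / L) t := by
    have hne := hwt t ht
    refine (((hcpow t).div (hlin t) hne).neg.div_const (L : ℂ)).congr_deriv ?_
    field_simp
    ring
  have htend : Tendsto (fun t : ℝ => -((x : ℂ) ^ (w - t) / (w - t)) / L) atTop (𝓝 0) := by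
    have h0 : Tendsto (fun t : ℝ => x ^ w.re / d / L * rexp (-L * t)) atTop (𝓝 0) := by
      simpa using (Real.tendsto_exp_atBot.comp
        (tendsto_id.const_mul_atTop_of_neg (neg_lt_zero.mpr hLpos))).const_mul (x ^ w.re / d / L)
    refine squeeze_zero_norm' ?_ h0
    filter_upwards [eventually_ge_atTop 0] with t ht
    rw [norm_div, norm_neg, norm_div, norm_ofReal_cpow_sub hx0, Complex.norm_real,
      Real.norm_of_nonneg hLpos.le, div_mul_eq_mul_div, div_mul_eq_mul_div]
    gcongr
    exact hdw t ht
  have hparts := integral_Ioi_of_hasDerivAt_of_tendsto' hderiv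
    ((hint 1).sub ((hint 2).div_const (L : ℂ))) htend
  rw [integral_sub (hint 1) ((hint 2).div_const (L : ℂ)), integral_div] at hparts
  have herr : (∫ t in Ioi (0 : ℝ), (x : ℂ) ^ (w - t) / (w - t)) - (x : ℂ) ^ w / (w * L) =
      (∫ t in Ioi (0 : ℝ), (x : ℂ) ^ (w - t) / (w - t) ^ 2) / L := by
    simp only [pow_one, Complex.ofReal_zero, sub_zero] at hparts
    rw [← div_div]
    linear_combination hparts
  have hbound : ‖∫ t in Ioi (0 : ℝ), (x : ℂ) ^ (w - t) / (w - t) ^ 2‖ ≤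
      ∫ t in Ioi (0 : ℝ), K * x ^ w.re / (d * ‖w‖) * rexp (-L * t) := by
    refine norm_integral_le_of_norm_le (hexp.const_mul _) ?_
    refine (ae_restrict_iff' measurableSet_Ioi).mpr (.of_forall fun t ht => ?_)
    have ht0 : 0 ≤ t := le_of_lt ht
    have hpos : 0 < ‖w - t‖ := norm_pos_iff.mpr (hwt t ht0)
    rw [norm_div, norm_pow, norm_ofReal_cpow_sub hx0, div_mul_eq_mul_div,
      div_le_div_iff₀ (by positivity) (by positivity)]
    calc x ^ w.re * rexp (-L * t) * (d * ‖w‖)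
        ≤ x ^ w.re * rexp (-L * t) * (‖w - t‖ * (K * ‖w - t‖)) := by
          gcongr
          exacts [hdw t ht0, hK t ht0]
      _ = K * x ^ w.re * rexp (-L * t) * ‖w - t‖ ^ 2 := by ring
  rw [integral_const_mul, integral_exp_mul_Ioi (neg_lt_zero.mpr hLpos)] at hbound
  rw [herr, norm_div, Complex.norm_real, Real.norm_of_nonneg hLpos.le, div_le_iff₀ hLpos]
  refine hbound.trans_eq ?_
  simp
  field_simp

/-- For real `s ≥ 0`, a nontrivial zero `ρ` of `ζ`, `d = min_{t ≥ 0} |ρ-s-t|`, uniformly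
for `x ≥ 2`: `∫₀^∞ x^{ρ-s-t}/(ρ-s-t) dt = x^{ρ-s}/((ρ-s) log x)
+ O(x^{Re ρ - s}/(d |ρ-s| (log x)²))`. -/
theorem stmt19 :
    ∃ C : ℝ, 0 < C ∧
      ∀ s : ℝ, 0 ≤ s → ∀ z : ℂ, riemannZeta z = 0 → 0 < z.re → z.re < 1 →
      ∀ x : ℝ, 2 ≤ x →
      (let d : ℝ := sInf ((fun t : ℝ => ‖z - s - t‖) '' Set.Ici 0)
       ‖(∫ t in Set.Ioi (0 : ℝ), (x : ℂ) ^ (z - s - t) / (z - s - t)) -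
           (x : ℂ) ^ (z - (s : ℂ)) / ((z - s) * Real.log x)‖ ≤
         C * x ^ (z.re - s) / (d * ‖z - s‖ * (Real.log x) ^ 2)) := by
  obtain ⟨c, hc, hcz⟩ := exists_pos_le_abs_im_of_riemannZeta_eq_zero
  refine ⟨1 / c + 1, by positivity, fun s hs z hz h0 h1 x hx => ?_⟩
  intro d
  have him (t : ℝ) : |z.im| ≤ ‖z - s - t‖ := by
    simpa using Complex.abs_im_le_norm (z - s - t)
  have hcim : c ≤ |z.im| := hcz z hz h0 h1
  have hd : 0 < d := (hc.trans_le hcim).trans_le <|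
    le_csInf (nonempty_Ici.image _) (forall_mem_image.mpr fun t _ => him t)
  have hdw (t : ℝ) (ht : 0 ≤ t) : d ≤ ‖z - s - t‖ :=
    csInf_le ⟨0, forall_mem_image.mpr fun _ _ => norm_nonneg _⟩ (mem_image_of_mem _ ht)
  have hK (t : ℝ) (ht : 0 ≤ t) : ‖z - s‖ ≤ (1 / c + 1) * ‖z - s - t‖ := by
    have hct : c ≤ ‖z - s - t‖ := hcim.trans (him t)
    have hone : 1 ≤ 1 / c * ‖z - s - t‖ := by
      rwa [one_div, inv_mul_eq_div, one_le_div hc]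
    suffices h : ‖z - s‖ ≤ ‖z - s - t‖ + 1 by linarith
    rcases le_total (z.re - s) 0 with hneg | hnonneg
    · have hsq : ‖z - s‖ ≤ ‖z - s - t‖ := by
        rw [← sq_le_sq₀ (norm_nonneg _) (norm_nonneg _), ← Complex.normSq_eq_norm_sq,
          ← Complex.normSq_eq_norm_sq, Complex.normSq_apply, Complex.normSq_apply]
        simp
        nlinarith
      linarith
    · have hle := Complex.norm_le_abs_re_add_abs_im (z - s)
      simp only [Complex.sub_re, Complex.ofReal_re, Complex.sub_im, Complex.ofReal_im, sub_zero,
        abs_of_nonneg hnonneg] at hle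
      linarith [him t]
  simpa using norm_integral_cpow_sub_div_sub_le (w := z - s) (by linarith : 1 < x) hd hdw hK
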